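/- Let k be a field, let Q be a connected finite acyclic quiver which is non-Dynkin, let Π(Q) be its preprojective algebra with the grading by path length, and let C be the adjacency matrix of the double quiver of Q. Then the matrix-valued Hilbert series h_Π(t) = Σ_{n≥0} [Π(Q)_n] t^n satisfies h_Π(t)·(1 − C t + t²·1) = 1 in the ring of r×r matrices over k[[t]]; equivalently, (1 − Ct + t²) is invertible there and h_Π(t) = 1/(1 − Ct + t²). This holds in arbitrary characteristic. -/

import Mathlib

/-!
STATEMENT 0: Hilbert series of the preprojective algebra of a connected finite
acyclic non-Dynkin quiver: `h_Π(t) · (1 - C t + t² · 1) = 1` over `k[[t]]`.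

A finite quiver is encoded by a vertex count `r`, a finite arrow type and
source/target maps.  The preprojective algebra is presented as the quotient of
the free algebra on generators `e_i` (trivial paths), `α` (original arrows) and
`α*` (reversed arrows) by the path-algebra relations together with the mesh
relations.  The grading is by path length (vertices have weight 0, arrows of
the double quiver weight 1); the degree-`n` piece is the span of the images of
the weight-`n` monomials, and `e_i Π_n e_j` is its image under
`x ↦ e_i * x * e_j`.
-/

/-- A finite quiver. -/
structure FinQuiver where
  r : ℕ
  Arrow : Type
  [instFintypeArrow : Fintype Arrow]
  src : Arrow → Fin r
  tgt : Arrow → Fin r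

attribute [instance] FinQuiver.instFintypeArrow

namespace FinQuiver

variable (Q : FinQuiver)

/-- The underlying graph of `Q` is connected. -/
def Connected : Prop :=
  ∀ i j : Fin Q.r, Relation.ReflTransGen
    (fun a b => ∃ e : Q.Arrow, (Q.src e = a ∧ Q.tgt e = b) ∨ (Q.src e = b ∧ Q.tgt e = a)) i j

/-- `Q` has no oriented cycles. -/
def Acyclic : Prop :=
  ∀ i : Fin Q.r, ¬ Relation.TransGen (fun a b => ∃ e : Q.Arrow, Q.src e = a ∧ Q.tgt e = b) i i

/-- The Tits quadratic form of `Q` on `ℝ^{Q₀}`. -/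
def titsForm (x : Fin Q.r → ℝ) : ℝ :=
  (∑ i, x i ^ 2) - ∑ e : Q.Arrow, x (Q.src e) * x (Q.tgt e)

/-- `Q` is Dynkin iff its Tits form is positive definite. -/
def IsDynkin : Prop := ∀ x : Fin Q.r → ℝ, x ≠ 0 → 0 < Q.titsForm x

/-- Adjacency matrix of `Q`: the `(i,j)` entry counts arrows `i → j`. -/
def adjMatrix : Matrix (Fin Q.r) (Fin Q.r) ℕ := Matrix.of fun i j =>
  Fintype.card {e : Q.Arrow // Q.src e = i ∧ Q.tgt e = j}

/-- Adjacency matrix `C` of the double quiver `Q̄`. -/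
def doubleAdj : Matrix (Fin Q.r) (Fin Q.r) ℕ := Matrix.of fun i j =>
  Q.adjMatrix i j + Q.adjMatrix j i

end FinQuiver

/-- Generators for the path algebra of the double quiver: trivial paths,
original arrows, reversed arrows. -/
inductive PPGen (Q : FinQuiver) : Type
  | vert : Fin Q.r → PPGen Q
  | fwd : Q.Arrow → PPGen Q
  | bwd : Q.Arrow → PPGen Q

/-- The mesh element `ρ_i = ∑_{src α = i} α α* - ∑_{tgt α = i} α* α`
in the free algebra.  (An arrow `α` runs from `src α` to `tgt α`, and paths
compose left-to-right, so `e_i ρ_i e_i = ρ_i`.) -/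
noncomputable def meshElem (k : Type) [Field k] (Q : FinQuiver) (i : Fin Q.r) :
    FreeAlgebra k (PPGen Q) :=
  (∑ e : Q.Arrow, if Q.src e = i then
      FreeAlgebra.ι k (PPGen.fwd e) * FreeAlgebra.ι k (PPGen.bwd e) else 0)
  - ∑ e : Q.Arrow, if Q.tgt e = i then
      FreeAlgebra.ι k (PPGen.bwd e) * FreeAlgebra.ι k (PPGen.fwd e) else 0

/-- Defining relations of the preprojective algebra: the `e_i` are orthogonal
idempotents summing to `1`, arrows are composable according to souce and target,
and all mesh relations `ρ_i = 0` hold. -/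
inductive PPRel (k : Type) [Field k] (Q : FinQuiver) :
    FreeAlgebra k (PPGen Q) → FreeAlgebra k (PPGen Q) → Prop
  | vert_idem (i : Fin Q.r) :
      PPRel k Q (FreeAlgebra.ι k (PPGen.vert i) * FreeAlgebra.ι k (PPGen.vert i))
        (FreeAlgebra.ι k (PPGen.vert i))
  | vert_orth (i j : Fin Q.r) (h : i ≠ j) :
      PPRel k Q (FreeAlgebra.ι k (PPGen.vert i) * FreeAlgebra.ι k (PPGen.vert j)) 0
  | vert_sum : PPRel k Q (∑ i : Fin Q.r, FreeAlgebra.ι k (PPGen.vert i)) 1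
  | fwd_left (e : Q.Arrow) :
      PPRel k Q (FreeAlgebra.ι k (PPGen.vert (Q.src e)) * FreeAlgebra.ι k (PPGen.fwd e))
        (FreeAlgebra.ι k (PPGen.fwd e))
  | fwd_right (e : Q.Arrow) :
      PPRel k Q (FreeAlgebra.ι k (PPGen.fwd e) * FreeAlgebra.ι k (PPGen.vert (Q.tgt e)))
        (FreeAlgebra.ι k (PPGen.fwd e))
  | bwd_left (e : Q.Arrow) :
      PPRel k Q (FreeAlgebra.ι k (PPGen.vert (Q.tgt e)) * FreeAlgebra.ι k (PPGen.bwd e))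
        (FreeAlgebra.ι k (PPGen.bwd e))
  | bwd_right (e : Q.Arrow) :
      PPRel k Q (FreeAlgebra.ι k (PPGen.bwd e) * FreeAlgebra.ι k (PPGen.vert (Q.src e)))
        (FreeAlgebra.ι k (PPGen.bwd e))
  | mesh (i : Fin Q.r) : PPRel k Q (meshElem k Q i) 0

/-- The preprojective algebra `Π(Q)`. -/
abbrev PreprojAlg (k : Type) [Field k] (Q : FinQuiver) : Type :=
  RingQuot (PPRel k Q)

/-- The image in `Π(Q)` of a generator. -/
noncomputable def ppGen (k : Type) [Field k] (Q : FinQuiver) (g : PPGen Q) :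
    PreprojAlg k Q :=
  RingQuot.mkAlgHom k (PPRel k Q) (FreeAlgebra.ι k g)

/-- The idempotent `e_i ∈ Π(Q)`. -/
noncomputable def ppIdem (k : Type) [Field k] (Q : FinQuiver) (i : Fin Q.r) :
    PreprojAlg k Q :=
  ppGen k Q (PPGen.vert i)

/-- Path-length weight of a generator. -/
def ppWt (Q : FinQuiver) : PPGen Q → ℕ
  | .vert _ => 0
  | .fwd _ => 1
  | .bwd _ => 1

/-- The degree-`n` component `Π(Q)_n`: span of images of weight-`n` monomials. -/
noncomputable def ppPiece (k : Type) [Field k] (Q : FinQuiver) (n : ℕ) :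
    Submodule k (PreprojAlg k Q) :=
  Submodule.span k
    {x | ∃ l : List (PPGen Q), (l.map (ppWt Q)).sum = n ∧ x = (l.map (ppGen k Q)).prod}

/-- The subspace `e_i Π(Q)_n e_j`. -/
noncomputable def ppCorner (k : Type) [Field k] (Q : FinQuiver) (n : ℕ) (i j : Fin Q.r) :
    Submodule k (PreprojAlg k Q) :=
  (ppPiece k Q n).map
    ((LinearMap.mulLeft k (ppIdem k Q i)).comp (LinearMap.mulRight k (ppIdem k Q j)))

/-- The matrix-valued Hilbert series `h_Π(t) = ∑_n [Π(Q)_n] tⁿ` over `k[[t]]`. -/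
noncomputable def ppHilb (k : Type) [Field k] (Q : FinQuiver) :
    Matrix (Fin Q.r) (Fin Q.r) (PowerSeries k) :=
  Matrix.of fun i j => PowerSeries.mk fun n => (Module.finrank k (ppCorner k Q n i j) : k)

/-!
Write `Π = Π(Q)`, fix `i`, and let `D_n = [Π_n]`. The mesh relations give complexes `e_i Π_n e_j
→ ⨁_{b : j → l} e_i Π_{n+1} e_l → e_i Π_{n+2} e_j → 0`, and these are always exact on the right
and in the middle: a cycle `(z_b)` has zero mesh sum, and the Fox derivation with values in the
free module on the arrows modulo the family `(b)_b` turns this into `z_b = y b` for a common `y`.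
Hence `D_{n+1} C ≤ D_{n+2} + D_n`, with equality (the recursion for `1 / (1 - C t + t²)`) exactly
when the left-hand maps are injective, that is, when no nonzero `y ∈ e_i Π_n e_j` is killed by
all arrows.

Suppose there is such a `y`. For every functional `f`, the map `x ↦ f (x e_j) y` commutes with
the mesh relations, so exactness in the middle lets one peel off arrows and shows that on `Π_n`
it is left multiplication by some `s`; on `e_i Π_n` only the degree-zero part of `s` matters, so
the map acts as a scalar there. Thus `e_i Π_n` is spanned by `y` and `e_i Π_{n+1} = 0`. Summing
the inequalities up to `n`, the vector `∑_{m ≤ n} dim e_i Π_m e_j` is a subadditive function on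
the graph which is strictly subadditive at `i`, and then Vinberg's identity makes the Tits form
positive definite: `Q` is Dynkin.
-/

namespace FinQuiver

variable {Q : FinQuiver}

section DoubleQuiver

variable (Q) in
/-- The arrows of the double quiver: `Sum.inl α` is an arrow `α` of `Q` and `Sum.inr α` is its
reverse `α*`, so that `Sum.swap` is the involution `b ↦ b*`. -/
abbrev DArrow : Type := Q.Arrow ⊕ Q.Arrow

/-- The source of an arrow of the double quiver. -/
def dsrc : Q.DArrow → Fin Q.r := Sum.elim Q.src Q.tgt

/-- The target of an arrow of the double quiver. -/
def dtgt : Q.DArrow → Fin Q.r := Sum.elim Q.tgt Q.src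

/-- The sign with which `b b*` enters the mesh relation at the source of `b`. -/
def dsign (k : Type) [Field k] : Q.DArrow → k := Sum.elim (fun _ => 1) (fun _ => -1)

/-- The arrows of the double quiver starting at `j`. -/
abbrev OutArrow (j : Fin Q.r) : Type := {b : Q.DArrow // dsrc b = j}

@[simp] lemma dsrc_swap (b : Q.DArrow) : dsrc b.swap = dtgt b := by cases b <;> rfl

@[simp] lemma dtgt_swap (b : Q.DArrow) : dtgt b.swap = dsrc b := by cases b <;> rfl

lemma dsign_mul_self (k : Type) [Field k] (b : Q.DArrow) : dsign k b * dsign k b = 1 := by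
  cases b <;> simp [dsign]

lemma sum_dsign_smul (k : Type) [Field k] {M : Type*} [AddCommGroup M] [Module k M]
    (f : Q.DArrow → M) : ∑ b, dsign k b • f b = ∑ α, f (.inl α) - ∑ α, f (.inr α) := by
  simp [dsign, sub_eq_add_neg]

lemma sum_outArrow {M : Type*} [AddCommMonoid M] (j : Fin Q.r) (f : Q.DArrow → M) :
    ∑ b : OutArrow j, f b = ∑ b, if dsrc b = j then f b else 0 := by
  rw [← Finset.sum_filter, ← Finset.sum_subtype_eq_sum_filter]
  simp [Finset.subtype_univ]

lemma doubleAdj_eq_card (j l : Fin Q.r) :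
    Q.doubleAdj j l = Fintype.card {b : OutArrow j // dtgt b.1 = l} := by
  rw [Fintype.card_congr (Equiv.subtypeSubtypeEquivSubtypeInter _ fun b : Q.DArrow => dtgt b = l),
    Fintype.card_congr Equiv.subtypeSum, Fintype.card_sum]
  exact congrArg₂ (· + ·) (Fintype.card_congr (.refl _))
    (Fintype.card_congr (Equiv.subtypeEquivRight fun _ => and_comm))

lemma doubleAdj_comm (i j : Fin Q.r) : Q.doubleAdj i j = Q.doubleAdj j i :=
  Nat.add_comm _ _

lemma sum_outArrow_dtgt {M : Type*} [AddCommMonoid M] (j : Fin Q.r) (f : Fin Q.r → M) :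
    ∑ b : OutArrow j, f (dtgt b.1) = ∑ l, Q.doubleAdj j l • f l := by
  rw [← Fintype.sum_fiberwise (fun b : OutArrow j => dtgt b.1)]
  refine Finset.sum_congr rfl fun l _ => ?_
  rw [doubleAdj_eq_card, ← Finset.card_univ, ← Finset.sum_const]
  exact Finset.sum_congr rfl fun b _ => congrArg f b.2

lemma Connected.induction (hconn : Q.Connected) {P : Fin Q.r → Prop} {i : Fin Q.r} (base : P i)
    (step : ∀ b : Q.DArrow, P (dsrc b) → P (dtgt b)) (j : Fin Q.r) : P j := by
  induction hconn i j with
  | refl => exact base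
  | tail _ h ih =>
    obtain ⟨e, ⟨rfl, rfl⟩ | ⟨rfl, rfl⟩⟩ := h
    exacts [step (.inl e) ih, step (.inr e) ih]

end DoubleQuiver

section SubadditiveFunctions

/-- A subadditive function for the Cartan matrix `2 - C` of the underlying graph. -/
def IsSubadditive (s : Fin Q.r → ℝ) : Prop :=
  ∀ j, ∑ b : OutArrow j, s (dtgt b.1) ≤ 2 * s j

-- Division-free form of Vinberg's identity for the quadratic form of a Cartan matrix.
lemma two_mul_titsForm_mul (s y : Fin Q.r → ℝ) :
    2 * Q.titsForm (s * y) =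
      ∑ j, (2 * s j - ∑ b : OutArrow j, s (dtgt b.1)) * (s j * y j ^ 2) +
        ∑ e, s (Q.src e) * s (Q.tgt e) * (y (Q.src e) - y (Q.tgt e)) ^ 2 := by
  have hnbr : ∑ j, (∑ b : OutArrow j, s (dtgt b.1)) * (s j * y j ^ 2) =
      ∑ e, s (Q.src e) * s (Q.tgt e) * (y (Q.src e) ^ 2 + y (Q.tgt e) ^ 2) := by
    calc
      _ = ∑ b : Q.DArrow, s (dtgt b) * (s (dsrc b) * y (dsrc b) ^ 2) := by
        rw [← Fintype.sum_fiberwise (dsrc (Q := Q))]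
        refine Finset.sum_congr rfl fun j _ => ?_
        rw [Finset.sum_mul]
        exact Finset.sum_congr rfl fun b _ => by rw [b.2]
      _ = _ := by
        rw [Fintype.sum_sum_type, ← Finset.sum_add_distrib]
        refine Finset.sum_congr rfl fun e _ => ?_
        simp only [dsrc, dtgt, Sum.elim_inl, Sum.elim_inr]
        ring
  simp only [sub_mul, Finset.sum_sub_distrib, hnbr]
  simp only [titsForm, Pi.mul_apply, mul_sub, Finset.mul_sum, sub_add, ← Finset.sum_sub_distrib]
  congr 1 <;> exact Finset.sum_congr rfl fun _ _ => by ring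

lemma IsSubadditive.pos {s : Fin Q.r → ℝ} (hs : IsSubadditive s) (hconn : Q.Connected)
    (hs0 : ∀ j, 0 ≤ s j) {i : Fin Q.r} (hi : 0 < s i) (j : Fin Q.r) : 0 < s j := by
  refine hconn.induction (P := fun j => 0 < s j) hi (fun b hb => ?_) j
  have hle : s (dsrc b) ≤ ∑ c : OutArrow (dtgt b), s (dtgt c.1) := by
    simpa using Finset.single_le_sum (f := fun c : OutArrow (dtgt b) => s (dtgt c.1))
      (fun c _ => hs0 _) (Finset.mem_univ ⟨b.swap, dsrc_swap b⟩)
  linarith [hs (dtgt b)]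

theorem IsSubadditive.isDynkin {s : Fin Q.r → ℝ} (hs : IsSubadditive s) (hconn : Q.Connected)
    (hs0 : ∀ j, 0 ≤ s j) {i : Fin Q.r} (hi : ∑ b : OutArrow i, s (dtgt b.1) < 2 * s i) :
    Q.IsDynkin := by
  have hsi : 0 < s i := by
    linarith [Finset.sum_nonneg fun (b : OutArrow i) (_ : b ∈ Finset.univ) => hs0 (dtgt b.1)]
  have hpos := hs.pos hconn hs0 hsi
  intro x hx
  set y : Fin Q.r → ℝ := x / s
  have hxy : x = s * y := funext fun j => (mul_div_cancel₀ (x j) (hpos j).ne').symm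
  have hvert : ∀ j, 0 ≤ (2 * s j - ∑ b : OutArrow j, s (dtgt b.1)) * (s j * y j ^ 2) := fun j =>
    mul_nonneg (sub_nonneg.2 (hs j)) (mul_nonneg (hs0 j) (sq_nonneg _))
  have hedge : ∀ e, 0 ≤ s (Q.src e) * s (Q.tgt e) * (y (Q.src e) - y (Q.tgt e)) ^ 2 := fun e =>
    mul_nonneg (mul_nonneg (hs0 _) (hs0 _)) (sq_nonneg _)
  by_contra hneg
  have hident := two_mul_titsForm_mul s y
  have hvert_sum := Finset.sum_nonneg fun j (_ : j ∈ Finset.univ) => hvert j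
  have hedge_sum := Finset.sum_nonneg fun e (_ : e ∈ Finset.univ) => hedge e
  rw [← hxy] at hident
  have hyi : y i = 0 := by
    have := (Finset.sum_eq_zero_iff_of_nonneg fun j _ => hvert j).1 (by linarith) i
      (Finset.mem_univ i)
    simpa [(sub_pos.2 hi).ne', hsi.ne'] using this
  have hconst : ∀ e, y (Q.src e) = y (Q.tgt e) := fun e => by
    have := (Finset.sum_eq_zero_iff_of_nonneg fun e _ => hedge e).1 (by linarith) e
      (Finset.mem_univ e)
    simpa [(hpos _).ne', sub_eq_zero] using this
  refine hx (hxy.trans ?_)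
  have hy : ∀ j, y j = 0 := hconn.induction (P := fun j => y j = 0) hyi fun b hb => by
    rcases b with e | e
    exacts [(hconst e).symm.trans hb, (hconst e).trans hb]
  ext j
  simp [hy j]

end SubadditiveFunctions

end FinQuiver

section MatrixPowerSeries

open PowerSeries

theorem mk_mul_one_sub_X_smul_add_X_sq_smul_eq_one {ι R : Type*} [Fintype ι] [DecidableEq ι]
    [CommRing R] {A : Matrix ι ι R} {D : ℕ → Matrix ι ι R} (h0 : D 0 = 1) (h1 : D 1 = A)
    (hrec : ∀ n, D (n + 1) * A = D (n + 2) + D n) :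
    (Matrix.of fun i j => mk fun n => D n i j) *
      (1 - (X : R⟦X⟧) • A.map C + (X ^ 2 : R⟦X⟧) • (1 : Matrix ι ι R⟦X⟧)) = 1 := by
  have hmul : (Matrix.of fun i j => mk fun n => D n i j) * A.map C =
      Matrix.of fun i j => mk fun n => (D n * A) i j := by
    ext i j n
    simp [Matrix.mul_apply]
  rw [mul_add, mul_sub, mul_one, mul_smul_comm, mul_smul_comm, mul_one, hmul]
  ext i j n
  rcases n with _ | _ | n <;> obtain rfl | hij := eq_or_ne i j <;>
    simp [*, coeff_succ_X_mul, coeff_X_pow_mul', coeff_one]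

end MatrixPowerSeries

namespace PreprojAlg

open FinQuiver
open GradedAlgebra (proj)

variable {k : Type} [Field k] {Q : FinQuiver}

section Presentation

/-- Elements `e i` and `a b` of a `k`-algebra satisfying the relations of the preprojective algebra
of `Q`. The mesh relations are summed over all vertices; multiplication by `e i` recovers the one at
`i`. -/
structure IsMeshSystem (k : Type) [Field k] {Q : FinQuiver} {B : Type*} [Semiring B] [Algebra k B]
    (e : Fin Q.r → B) (a : Q.DArrow → B) : Prop where
  idem : CompleteOrthogonalIdempotents e
  idem_mul : ∀ b, e (dsrc b) * a b = a b
  mul_idem : ∀ b, a b * e (dtgt b) = a b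
  mesh : ∑ b, dsign k b • (a b * a b.swap) = 0

variable {B : Type*} [Semiring B] [Algebra k B] {e : Fin Q.r → B} {a : Q.DArrow → B}

lemma IsMeshSystem.idem_mul_arr (h : IsMeshSystem k e a) (i : Fin Q.r) (b : Q.DArrow) :
    e i * a b = if dsrc b = i then a b else 0 := by
  rw [← h.idem_mul b, ← mul_assoc, h.idem.mul_eq, ite_mul, zero_mul]
  split_ifs with hi hb hb
  exacts [by rw [hi], absurd hi.symm hb, absurd hb.symm hi, rfl]

lemma IsMeshSystem.arr_mul_idem (h : IsMeshSystem k e a) (b : Q.DArrow) (i : Fin Q.r) :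
    a b * e i = if dtgt b = i then a b else 0 := by
  rw [← h.mul_idem b, mul_assoc, h.idem.mul_eq, mul_ite, mul_zero]

lemma IsMeshSystem.mesh_vertex (h : IsMeshSystem k e a) (i : Fin Q.r) :
    ∑ b, dsign k b • (if dsrc b = i then a b * a b.swap else 0) = 0 := by
  have hi := congrArg (e i * ·) h.mesh
  simpa only [Finset.mul_sum, mul_smul_comm, ← mul_assoc, h.idem_mul_arr, ite_mul, zero_mul,
    mul_zero] using hi

lemma IsMeshSystem.lift_eq_of_rel (h : IsMeshSystem k e a) :
    ∀ ⦃x y⦄, PPRel k Q x y →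
      FreeAlgebra.lift k (PPGen.rec e (a ∘ .inl) (a ∘ .inr)) x =
        FreeAlgebra.lift k (PPGen.rec e (a ∘ .inl) (a ∘ .inr)) y := by
  intro x y hxy
  induction hxy with
  | vert_idem i => simpa using (h.idem.idem i).eq
  | vert_orth i j hij => simpa using h.idem.ortho hij
  | vert_sum => simpa using h.idem.complete
  | fwd_left α => simpa [dsrc, dtgt] using h.idem_mul (.inl α)
  | fwd_right α => simpa [dsrc, dtgt] using h.mul_idem (.inl α)
  | bwd_left α => simpa [dsrc, dtgt] using h.idem_mul (.inr α)
  | bwd_right α => simpa [dsrc, dtgt] using h.mul_idem (.inr α)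
  | mesh i =>
    let _ : Ring B := Algebra.semiringToRing k
    simp only [meshElem, map_sub, map_sum, apply_ite (FreeAlgebra.lift k _), map_mul,
      FreeAlgebra.lift_ι_apply, map_zero]
    exact (sum_dsign_smul k _).symm.trans (h.mesh_vertex i)

/-- The universal property of the preprojective algebra. -/
noncomputable def lift (h : IsMeshSystem k e a) : PreprojAlg k Q →ₐ[k] B :=
  RingQuot.liftAlgHom k ⟨FreeAlgebra.lift k (PPGen.rec e (a ∘ .inl) (a ∘ .inr)),
    h.lift_eq_of_rel⟩

lemma lift_idem (h : IsMeshSystem k e a) (i : Fin Q.r) : lift h (ppIdem k Q i) = e i := by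
  simp [lift, ppIdem, ppGen]

variable (k) in
/-- The class in `Π(Q)` of an arrow of the double quiver. -/
noncomputable def arr : Q.DArrow → PreprojAlg k Q :=
  Sum.elim (fun α => ppGen k Q (.fwd α)) (fun α => ppGen k Q (.bwd α))

lemma lift_arr (h : IsMeshSystem k e a) (b : Q.DArrow) : lift h (arr k b) = a b := by
  rcases b with α | α <;> simp [lift, arr, ppGen]

variable (k Q) in
lemma isMeshSystem : IsMeshSystem k (ppIdem k Q) (arr k) where
  idem :=
    { idem := fun i => by
        simpa [IsIdempotentElem, ppIdem, ppGen] using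
          RingQuot.mkAlgHom_rel k (PPRel.vert_idem (k := k) i)
      ortho := fun i j hij => by
        simpa [ppIdem, ppGen] using RingQuot.mkAlgHom_rel k (PPRel.vert_orth (k := k) i j hij)
      complete := by
        simpa [ppIdem, ppGen] using RingQuot.mkAlgHom_rel k (PPRel.vert_sum (k := k) (Q := Q)) }
  idem_mul := by
    rintro (α | α)
    · simpa [arr, dsrc, dtgt, ppIdem, ppGen] using
        RingQuot.mkAlgHom_rel k (PPRel.fwd_left (k := k) α)
    · simpa [arr, dsrc, dtgt, ppIdem, ppGen] using
        RingQuot.mkAlgHom_rel k (PPRel.bwd_left (k := k) α)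
  mul_idem := by
    rintro (α | α)
    · simpa [arr, dsrc, dtgt, ppIdem, ppGen] using
        RingQuot.mkAlgHom_rel k (PPRel.fwd_right (k := k) α)
    · simpa [arr, dsrc, dtgt, ppIdem, ppGen] using
        RingQuot.mkAlgHom_rel k (PPRel.bwd_right (k := k) α)
  mesh := by
    have hmesh := Finset.sum_eq_zero fun i (_ : i ∈ Finset.univ) =>
      (RingQuot.mkAlgHom_rel k (PPRel.mesh (k := k) (Q := Q) i)).trans (map_zero _)
    simp only [meshElem, map_sub, map_sum, apply_ite (RingQuot.mkAlgHom k (PPRel k Q)), map_mul,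
      map_zero, Finset.sum_sub_distrib] at hmesh
    rw [Finset.sum_comm, Finset.sum_comm (s := Finset.univ (α := Fin Q.r))] at hmesh
    refine (sum_dsign_smul k _).trans ?_
    simpa [arr, ppGen] using hmesh

lemma idem_mul_arr (i : Fin Q.r) (b : Q.DArrow) :
    ppIdem k Q i * arr k b = if dsrc b = i then arr k b else 0 :=
  (isMeshSystem k Q).idem_mul_arr i b

lemma arr_mul_idem (b : Q.DArrow) (i : Fin Q.r) :
    arr k b * ppIdem k Q i = if dtgt b = i then arr k b else 0 :=
  (isMeshSystem k Q).arr_mul_idem b i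

lemma idem_mul_idem (i j : Fin Q.r) :
    ppIdem k Q i * ppIdem k Q j = if i = j then ppIdem k Q i else 0 :=
  (isMeshSystem k Q).idem.mul_eq i j

@[elab_as_elim]
lemma induction {P : PreprojAlg k Q → Prop} (algebraMap : ∀ c, P (algebraMap k _ c))
    (idem : ∀ i, P (ppIdem k Q i)) (arr : ∀ b, P (arr k b))
    (add : ∀ x y, P x → P y → P (x + y)) (mul : ∀ x y, P x → P y → P (x * y))
    (x : PreprojAlg k Q) : P x := by
  obtain ⟨x, rfl⟩ := RingQuot.mkAlgHom_surjective k (PPRel k Q) x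
  induction x using FreeAlgebra.induction with
  | grade0 c => simpa only [AlgHom.commutes] using algebraMap c
  | grade1 g =>
    cases g with
    | vert i => exact idem i
    | fwd α => exact arr (.inl α)
    | bwd α => exact arr (.inr α)
  | mul x y hx hy => simpa only [map_mul] using mul _ _ hx hy
  | add x y hx hy => simpa only [map_add] using add _ _ hx hy

lemma idem_ne_zero (i : Fin Q.r) : ppIdem k Q i ≠ 0 := by
  have h : IsMeshSystem k (Q := Q) (fun i => Pi.single i 1 : Fin Q.r → Fin Q.r → k) 0 :=
    { idem := CompleteOrthogonalIdempotents.single fun _ => k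
      idem_mul := by simp
      mul_idem := by simp
      mesh := by simp }
  intro hi
  simpa [lift_idem] using congrFun (congrArg (lift h) hi) i

end Presentation

section Grading

lemma gen_mem_piece (g : PPGen Q) : ppGen k Q g ∈ ppPiece k Q (ppWt Q g) :=
  Submodule.subset_span ⟨[g], by simp, by simp⟩

lemma idem_mem_piece (i : Fin Q.r) : ppIdem k Q i ∈ ppPiece k Q 0 := gen_mem_piece (.vert i)

lemma arr_mem_piece (b : Q.DArrow) : arr k b ∈ ppPiece k Q 1 := by
  rcases b with α | α
  exacts [gen_mem_piece (.fwd α), gen_mem_piece (.bwd α)]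

instance : SetLike.GradedMonoid (ppPiece k Q) where
  one_mem := Submodule.subset_span ⟨[], rfl, rfl⟩
  mul_mem m n x y hx hy := by
    have hxy := Submodule.mul_mem_mul hx hy
    rw [ppPiece, ppPiece, Submodule.span_mul_span] at hxy
    refine Submodule.span_mono ?_ hxy
    rintro _ ⟨_, ⟨l, hl, rfl⟩, _, ⟨l', hl', rfl⟩, rfl⟩
    exact ⟨l ++ l', by simp [hl, hl'], by simp⟩

lemma of_mul_of_eq_of {ι R A : Type*} [DecidableEq ι] [AddMonoid ι] [CommSemiring R] [Semiring A]
    [Algebra R A] (𝒜 : ι → Submodule R A) [SetLike.GradedMonoid 𝒜] {m n p : ι} (hp : m + n = p)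
    {x : 𝒜 m} {y : 𝒜 n} {z : 𝒜 p} (hz : (x * y : A) = z) :
    DirectSum.of (fun i => 𝒜 i) m x * DirectSum.of (fun i => 𝒜 i) n y =
      DirectSum.of (fun i => 𝒜 i) p z := by
  subst hp
  rw [DirectSum.of_mul_of]
  exact congrArg _ (Subtype.ext hz)

variable (k Q) in
lemma isMeshSystem_directSum_of : IsMeshSystem k (Q := Q)
    (fun i => DirectSum.of (fun n => ppPiece k Q n) 0 ⟨ppIdem k Q i, idem_mem_piece i⟩)
    (fun b => DirectSum.of (fun n => ppPiece k Q n) 1 ⟨arr k b, arr_mem_piece b⟩) where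
  idem :=
    { idem := fun i => of_mul_of_eq_of _ (zero_add 0) ((isMeshSystem k Q).idem.idem i)
      ortho := fun i j hij => by
        simpa using of_mul_of_eq_of (ppPiece k Q) (zero_add 0) (z := 0)
          (x := ⟨_, idem_mem_piece i⟩) (y := ⟨_, idem_mem_piece j⟩)
          ((isMeshSystem k Q).idem.ortho hij)
      complete := by
        rw [← map_sum]
        exact congrArg _ (Subtype.ext (by simpa using (isMeshSystem k Q).idem.complete)) }
  idem_mul b := of_mul_of_eq_of _ (zero_add 1) ((isMeshSystem k Q).idem_mul b)
  mul_idem b := of_mul_of_eq_of _ (add_zero 1) ((isMeshSystem k Q).mul_idem b)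
  mesh := by
    have hmem (b : Q.DArrow) : arr k b * arr k b.swap ∈ ppPiece k Q (1 + 1) :=
      SetLike.mul_mem_graded (arr_mem_piece b) (arr_mem_piece b.swap)
    have hmul (b : Q.DArrow) : DirectSum.of (fun n => ppPiece k Q n) 1 ⟨_, arr_mem_piece b⟩ *
        DirectSum.of (fun n => ppPiece k Q n) 1 ⟨_, arr_mem_piece b.swap⟩ =
          DirectSum.lof k ℕ (fun n => ppPiece k Q n) (1 + 1) ⟨_, hmem b⟩ :=
      of_mul_of_eq_of _ rfl rfl
    simp only [hmul, ← map_smul, ← map_sum]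
    refine (congrArg _ (Subtype.ext ?_)).trans (map_zero _)
    simpa using (isMeshSystem k Q).mesh

lemma lift_directSum_of_gen (g : PPGen Q) : lift (isMeshSystem_directSum_of k Q) (ppGen k Q g) =
    DirectSum.of (fun n => ppPiece k Q n) (ppWt Q g) ⟨_, gen_mem_piece g⟩ := by
  cases g with
  | vert i => exact lift_idem _ i
  | fwd α => exact lift_arr _ (.inl α)
  | bwd α => exact lift_arr _ (.inr α)

lemma lift_directSum_of_mem {n : ℕ} {x : PreprojAlg k Q} (hx : x ∈ ppPiece k Q n) :
    lift (isMeshSystem_directSum_of k Q) x =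
      DirectSum.lof k ℕ (fun n => ppPiece k Q n) n ⟨x, hx⟩ := by
  induction hx using Submodule.span_induction with
  | mem x hx =>
    obtain ⟨l, rfl, rfl⟩ := hx
    induction l with
    | nil => exact map_one _
    | cons g l ih =>
      simp only [List.map_cons, List.prod_cons, map_mul]
      rw [lift_directSum_of_gen, ih]
      exact of_mul_of_eq_of _ rfl rfl
  | zero => exact (map_zero _).trans (map_zero _).symm
  | add x y hx hy ihx ihy => rw [map_add, ihx, ihy, ← map_add]; rfl
  | smul c x hx ih => rw [map_smul, ih, ← map_smul]; rfl

noncomputable instance : GradedAlgebra (ppPiece k Q) :=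
  .ofAlgHom _ (lift (isMeshSystem_directSum_of k Q))
    (AlgHom.ext fun x => by
      induction x using PreprojAlg.induction with
      | algebraMap c => simp only [AlgHom.commutes]
      | idem i => simp [lift_idem]
      | arr b => simp [lift_arr]
      | add x y hx hy => rw [map_add, hx, hy, map_add]
      | mul x y hx hy => rw [map_mul, hx, hy, map_mul])
    fun _ x => lift_directSum_of_mem x.2

lemma piece_zero_le_span_idem : ppPiece k Q 0 ≤ Submodule.span k (Set.range (ppIdem k Q)) := by
  refine Submodule.span_le.2 ?_
  rintro _ ⟨l, hl, rfl⟩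
  induction l with
  | nil =>
    rw [List.map_nil, List.prod_nil, ← (isMeshSystem k Q).idem.complete]
    exact sum_mem fun i _ => Submodule.subset_span ⟨i, rfl⟩
  | cons g l ih =>
    rw [List.map_cons, List.sum_cons, add_eq_zero] at hl
    rw [List.map_cons, List.prod_cons]
    cases g with
    | vert i =>
      have h := Submodule.mul_mem_mul (Submodule.mem_span_singleton_self (R := k) (ppIdem k Q i))
        (ih hl.2)
      rw [Submodule.span_mul_span] at h
      refine Submodule.span_le.2 ?_ h
      rintro _ ⟨_, rfl, _, ⟨j, rfl⟩, rfl⟩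
      refine (congrArg (· ∈ Submodule.span k _) (idem_mul_idem i j)).mpr ?_
      split_ifs
      exacts [Submodule.subset_span ⟨i, rfl⟩, zero_mem _]
    | fwd | bwd => exact absurd hl.1 one_ne_zero

lemma piece_succ_le_iSup (n : ℕ) : ppPiece k Q (n + 1) ≤
    ⨆ b, (ppPiece k Q n).map (LinearMap.mulRight k (arr k b)) := by
  refine Submodule.span_le.2 ?_
  rintro _ ⟨l, hl, rfl⟩
  induction l using List.reverseRecOn with
  | nil => simp at hl
  | append_singleton l g ih =>
    simp only [List.map_append, List.sum_append, List.prod_append, List.map_singleton,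
      List.sum_singleton, List.prod_singleton] at hl ⊢
    cases g with
    | vert i =>
      suffices h : ⨆ b, (ppPiece k Q n).map (LinearMap.mulRight k (arr k b)) ≤
          (⨆ b, (ppPiece k Q n).map (LinearMap.mulRight k (arr k b))).comap
            (LinearMap.mulRight k (ppIdem k Q i)) from h (ih hl)
      refine iSup_le fun b => ?_
      rintro _ ⟨z, hz, rfl⟩
      refine Submodule.mem_iSup_of_mem b ?_
      simp only [LinearMap.mulRight_apply, mul_assoc]
      refine (congrArg (z * · ∈ _) (arr_mul_idem b i)).mpr ?_
      split_ifs
      exacts [⟨z, hz, rfl⟩, (mul_zero z).symm ▸ zero_mem _]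
    | fwd α =>
      exact Submodule.mem_iSup_of_mem (.inl α)
        ⟨_, Submodule.subset_span ⟨l, Nat.succ_injective hl, rfl⟩, rfl⟩
    | bwd α =>
      exact Submodule.mem_iSup_of_mem (.inr α)
        ⟨_, Submodule.subset_span ⟨l, Nat.succ_injective hl, rfl⟩, rfl⟩

lemma mem_corner_iff {n : ℕ} {i j : Fin Q.r} {x : PreprojAlg k Q} :
    x ∈ ppCorner k Q n i j ↔
      x ∈ ppPiece k Q n ∧ ppIdem k Q i * x = x ∧ x * ppIdem k Q j = x := by
  constructor
  · rintro ⟨x, hx, rfl⟩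
    refine ⟨?_, ?_, ?_⟩
    · simpa using SetLike.mul_mem_graded (idem_mem_piece i)
        (SetLike.mul_mem_graded hx (idem_mem_piece j))
    · simp [← mul_assoc, ((isMeshSystem k Q).idem.idem i).eq]
    · simp [mul_assoc, ((isMeshSystem k Q).idem.idem j).eq]
  · rintro ⟨hx, hi, hj⟩
    exact ⟨x, hx, by simp [hi, hj]⟩

lemma proj_eq_self {n : ℕ} {x : PreprojAlg k Q} (hx : x ∈ ppPiece k Q n) :
    proj (ppPiece k Q) n x = x := by
  rw [GradedAlgebra.proj_apply, DirectSum.decompose_of_mem_same _ hx]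

lemma proj_mem_piece (n : ℕ) (x : PreprojAlg k Q) : proj (ppPiece k Q) n x ∈ ppPiece k Q n :=
  SetLike.coe_mem _

lemma proj_add_mul (m : ℕ) {n : ℕ} (s : PreprojAlg k Q) {x : PreprojAlg k Q}
    (hx : x ∈ ppPiece k Q n) :
    proj (ppPiece k Q) (m + n) (s * x) = proj (ppPiece k Q) m s * x :=
  DirectSum.coe_decompose_mul_add_of_right_mem _ hx

end Grading

lemma sum_smul_idem_mul {i : Fin Q.r} {x : PreprojAlg k Q} (hx : ppIdem k Q i * x = x)
    (s : Fin Q.r → k) : (∑ l, s l • ppIdem k Q l) * x = s i • x := by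
  conv_lhs => rw [← hx]
  simp only [Finset.sum_mul, smul_mul_assoc, ← mul_assoc, idem_mul_idem, ite_mul, zero_mul]
  simp [hx]

section FoxCalculus

variable {F : Type*} [AddCommGroup F] [Module k F] [Module (PreprojAlg k Q) F]
  [IsScalarTower k (PreprojAlg k Q) F]

variable (k F) in
/-- The vertex `i` acting on the extension by `F` of the semisimple module `k^{Q₀}`. -/
noncomputable def foxIdem (i : Fin Q.r) : Module.End k (F × (Fin Q.r → k)) :=
  (Algebra.lsmul k k F (ppIdem k Q i)).prodMap (LinearMap.single k _ i ∘ₗ LinearMap.proj i)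

/-- The arrow `b` acting on the extension by `F` of the semisimple module `k^{Q₀}`: it sends the
basis vector of `k^{Q₀}` at its target to `u b`. -/
noncomputable def foxArr (u : Q.DArrow → F) (b : Q.DArrow) : Module.End k (F × (Fin Q.r → k)) :=
  .inl k _ _ ∘ₗ
    (Algebra.lsmul k k F (arr k b)).coprod ((LinearMap.proj (dtgt b)).smulRight (u b))

lemma foxIdem_apply (i : Fin Q.r) (p : F × (Fin Q.r → k)) :
    foxIdem k F i p = (ppIdem k Q i • p.1, Pi.single i (p.2 i)) := rfl

lemma foxArr_apply (u : Q.DArrow → F) (b : Q.DArrow) (p : F × (Fin Q.r → k)) :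
    foxArr u b p = (arr k b • p.1 + p.2 (dtgt b) • u b, 0) := rfl

variable {u : Q.DArrow → F}

lemma isMeshSystem_fox (hu : ∀ b, ppIdem k Q (dsrc b) • u b = u b)
    (hmesh : ∑ b, dsign k b • arr k b • u b.swap = 0) :
    IsMeshSystem k (foxIdem k F) (foxArr u) where
  idem :=
    { idem := fun i => LinearMap.ext fun p => by
        simp [foxIdem_apply, smul_smul, ((isMeshSystem k Q).idem.idem i).eq]
      ortho := fun i j hij => LinearMap.ext fun p => by
        simp [foxIdem_apply, smul_smul, (isMeshSystem k Q).idem.ortho hij, hij]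
      complete := LinearMap.ext fun p => by
        simp [foxIdem_apply, Prod.ext_iff, Prod.fst_sum, Prod.snd_sum, ← Finset.sum_smul,
          (isMeshSystem k Q).idem.complete, Finset.univ_sum_single] }
  idem_mul b := LinearMap.ext fun p => by
    simp [foxIdem_apply, foxArr_apply, smul_smul, (isMeshSystem k Q).idem_mul, hu,
      smul_comm _ (p.2 _)]
  mul_idem b := LinearMap.ext fun p => by
    simp [foxIdem_apply, foxArr_apply, smul_smul, (isMeshSystem k Q).mul_idem]
  mesh := by
    refine LinearMap.ext fun p => Prod.ext ?_ ?_
    · have hfst : ∑ b : Q.DArrow, dsign k b • (arr k b * arr k b.swap) • p.1 = 0 := by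
        simp only [← smul_assoc]
        rw [← Finset.sum_smul, (isMeshSystem k Q).mesh, zero_smul]
      have hsnd : ∑ b : Q.DArrow, dsign k b • p.2 (dsrc b) • arr k b • u b.swap = 0 := by
        have h := congrArg (fun f : F => (∑ i, p.2 i • ppIdem k Q i) • f) hmesh
        simp only [Finset.smul_sum, smul_zero] at h
        refine (Finset.sum_congr rfl fun b _ => ?_).trans h
        rw [smul_comm _ (dsign k b), smul_smul _ (arr k b),
          sum_smul_idem_mul ((isMeshSystem k Q).idem_mul b), smul_assoc]
      simpa [foxArr_apply, Prod.fst_sum, -Fintype.sum_sum_type, smul_add, Finset.sum_add_distrib,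
        smul_smul _ (arr k _), smul_comm (arr k _) (p.2 _)] using congrArg₂ (· + ·) hfst hsnd
    · simp [foxArr_apply, Prod.snd_sum]

theorem exists_foxDerivation (hu : ∀ b, ppIdem k Q (dsrc b) • u b = u b)
    (hmesh : ∑ b, dsign k b • arr k b • u b.swap = 0) :
    ∃ D : PreprojAlg k Q →ₗ[k] F, ∀ x b, D (x * arr k b) = x • u b := by
  let ρ := lift (isMeshSystem_fox hu hmesh)
  have hρ (x : PreprojAlg k Q) (f : F) : ρ x (f, 0) = (x • f, 0) := by
    induction x using PreprojAlg.induction generalizing f with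
    | algebraMap c => simp
    | idem i => simp [ρ, lift_idem, foxIdem_apply]
    | arr b => simp [ρ, lift_arr, foxArr_apply]
    | add x y hx hy => simp [hx, hy, add_smul]
    | mul x y hx hy => simp [hx, hy, mul_smul]
  refine ⟨LinearMap.fst k _ _ ∘ₗ LinearMap.applyₗ (0, 1) ∘ₗ ρ.toLinearMap, fun x b => ?_⟩
  have hb : ρ (arr k b) (0, 1) = (u b, 0) := by simp [ρ, lift_arr, foxArr_apply]
  simp [hb, hρ]

end FoxCalculus

-- The Fox derivation into the quotient of `Q.DArrow → Π(Q)` by the family `arr` maps the mesh sum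
-- of `z` to the class of `z`.
theorem exists_eq_mul_arr {z : Q.DArrow → PreprojAlg k Q}
    (hz : ∀ b, z b * ppIdem k Q (dtgt b) = z b)
    (hmesh : ∑ b, dsign k b • (z b * arr k b.swap) = 0) : ∃ y, ∀ b, z b = y * arr k b := by
  classical
  let N := Submodule.span (PreprojAlg k Q) {arr (Q := Q) k}
  let u (b : Q.DArrow) : (Q.DArrow → PreprojAlg k Q) ⧸ N :=
    N.mkQ (dsign k b.swap • Pi.single b.swap (ppIdem k Q (dsrc b)))
  have hu (b : Q.DArrow) : ppIdem k Q (dsrc b) • u b = u b := by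
    rw [← map_smul, smul_comm, ← Pi.single_smul, smul_eq_mul, idem_mul_idem, if_pos rfl]
  have hsmul {b : Q.DArrow} {x : PreprojAlg k Q} (hx : x * ppIdem k Q (dtgt b) = x) :
      dsign k b • x • u b.swap = N.mkQ (Pi.single b x) := by
    simp only [u, Sum.swap_swap, dsrc_swap]
    rw [← map_smul, smul_comm x, ← LinearMap.map_smul_of_tower, smul_smul,
      dsign_mul_self, one_smul, ← Pi.single_smul, smul_eq_mul, hx]
  have hmesh_u : ∑ b, dsign k b • arr k b • u b.swap = 0 := by
    simp only [hsmul ((isMeshSystem k Q).mul_idem _), ← map_sum, Finset.univ_sum_single]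
    exact (Submodule.Quotient.mk_eq_zero N).2 (Submodule.mem_span_singleton_self _)
  obtain ⟨D, hD⟩ := exists_foxDerivation hu hmesh_u
  have hDz (b : Q.DArrow) : D (dsign k b • (z b * arr k b.swap)) = N.mkQ (Pi.single b (z b)) := by
    rw [map_smul, hD, hsmul (hz b)]
  have hmk : N.mkQ z = 0 := by
    rw [← map_zero D, ← hmesh, map_sum, Finset.sum_congr rfl fun b _ => hDz b, ← map_sum,
      Finset.univ_sum_single]
  obtain ⟨y, hy⟩ := Submodule.mem_span_singleton.1 ((Submodule.Quotient.mk_eq_zero N).1 hmk)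
  exact ⟨y, fun b => (congrFun hy b).symm⟩

section Socle

lemma exists_comp_eq_of_range_le {R M N P : Type*} [Ring R] [AddCommGroup M] [AddCommGroup N]
    [AddCommGroup P] [Module R M] [Module R N] [Module R P] [Module.Projective R P]
    {f : M →ₗ[R] N} {g : P →ₗ[R] N} (h : LinearMap.range g ≤ LinearMap.range f) :
    ∃ s : P →ₗ[R] M, f ∘ₗ s = g := by
  obtain ⟨s, hs⟩ := Module.projective_lifting_property f.rangeRestrict
    (g.codRestrict (LinearMap.range f) fun x => h ⟨x, rfl⟩) f.surjective_rangeRestrict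
  exact ⟨s, LinearMap.ext fun x => congrArg Subtype.val (LinearMap.congr_fun hs x)⟩

/-- A linear endomorphism `T` of `Π(Q)` for which the family `b ↦ T (x * b)` is, for every `x`, a
cycle of the mesh complex. Left multiplications are of this kind. -/
structure IsMeshCompatible (T : PreprojAlg k Q →ₗ[k] PreprojAlg k Q) : Prop where
  map_mul_idem : ∀ x i, T (x * ppIdem k Q i) = T x * ppIdem k Q i
  mesh : ∀ x, ∑ b, dsign k b • (T (x * arr k b) * arr k b.swap) = 0

variable {T : PreprojAlg k Q →ₗ[k] PreprojAlg k Q}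

lemma IsMeshCompatible.exists_mul_arr (hT : IsMeshCompatible T) :
    ∃ S : PreprojAlg k Q →ₗ[k] PreprojAlg k Q,
      IsMeshCompatible S ∧ ∀ x b, S x * arr k b = T (x * arr k b) := by
  have hrange :
      LinearMap.range (LinearMap.pi fun b : Q.DArrow => T ∘ₗ LinearMap.mulRight k (arr k b)) ≤
      LinearMap.range (LinearMap.pi fun b : Q.DArrow => LinearMap.mulRight k (arr k b)) := by
    rintro _ ⟨x, rfl⟩
    obtain ⟨y, hy⟩ := exists_eq_mul_arr (z := fun b => T (x * arr k b))
      (fun b => by rw [← hT.map_mul_idem, mul_assoc, (isMeshSystem k Q).mul_idem]) (hT.mesh x)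
    exact ⟨y, funext fun b => (hy b).symm⟩
  obtain ⟨S₀, hS₀⟩ := exists_comp_eq_of_range_le hrange
  have hS₀_arr (x : PreprojAlg k Q) (b : Q.DArrow) : S₀ x * arr k b = T (x * arr k b) :=
    congrFun (LinearMap.congr_fun hS₀ x) b
  let S := ∑ l, LinearMap.mulRight k (ppIdem k Q l) ∘ₗ S₀ ∘ₗ LinearMap.mulRight k (ppIdem k Q l)
  have hS (x : PreprojAlg k Q) : S x = ∑ l, S₀ (x * ppIdem k Q l) * ppIdem k Q l := by
    simp [S, LinearMap.sum_apply]
  have hS_arr (x : PreprojAlg k Q) (b : Q.DArrow) : S x * arr k b = T (x * arr k b) := by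
    simp only [hS, Finset.sum_mul, mul_assoc, idem_mul_arr, mul_ite, mul_zero, Finset.sum_ite_eq,
      Finset.mem_univ, if_true, hS₀_arr]
  refine ⟨S, ⟨fun x i => ?_, fun x => ?_⟩, hS_arr⟩
  · simp only [hS, Finset.sum_mul, mul_assoc, idem_mul_idem]
    refine Finset.sum_congr rfl fun l _ => ?_
    obtain rfl | hil := eq_or_ne i l <;> simp [*, Ne.symm]
  · simp only [hS_arr, mul_assoc]
    have h := congrArg (fun y => T (x * y)) (isMeshSystem k Q).mesh
    simpa only [Finset.mul_sum, mul_smul_comm, map_sum, map_smul, mul_zero, map_zero] using h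

lemma IsMeshCompatible.exists_eq_mul (hT : IsMeshCompatible T) (n : ℕ) :
    ∃ s, ∀ x ∈ ppPiece k Q n, T x = s * x := by
  induction n generalizing T with
  | zero =>
    refine ⟨T 1, fun x hx => ?_⟩
    refine LinearMap.eqOn_span (g := LinearMap.mulLeft k (T 1)) ?_ (piece_zero_le_span_idem hx)
    rintro _ ⟨i, rfl⟩
    simpa using hT.map_mul_idem 1 i
  | succ n ih =>
    obtain ⟨S, hS, hS_arr⟩ := hT.exists_mul_arr
    obtain ⟨s, hs⟩ := ih hS
    refine ⟨s, fun x hx => ?_⟩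
    suffices h : ppPiece k Q (n + 1) ≤ LinearMap.eqLocus T (LinearMap.mulLeft k s) from h hx
    refine (piece_succ_le_iSup n).trans (iSup_le fun b => ?_)
    rintro _ ⟨z, hz, rfl⟩
    simp [← hS_arr, hs z hz, mul_assoc]

lemma isMeshCompatible_smulRight {j : Fin Q.r} {y : PreprojAlg k Q} (hyj : y * ppIdem k Q j = y)
    (hsocle : ∀ b, y * arr k b = 0) (f : Module.Dual k (PreprojAlg k Q)) :
    IsMeshCompatible ((f ∘ₗ LinearMap.mulRight k (ppIdem k Q j)).smulRight y) where
  map_mul_idem x i := by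
    simp only [LinearMap.smulRight_apply, LinearMap.comp_apply, LinearMap.mulRight_apply,
      smul_mul_assoc]
    rw [← hyj]
    simp only [mul_assoc, idem_mul_idem]
    obtain rfl | hij := eq_or_ne i j <;> simp [*, Ne.symm]
  mesh x := by simp [hsocle]

variable {n : ℕ} {i j : Fin Q.r} {y : PreprojAlg k Q}

theorem exists_eq_smul_of_socle (hy : y ∈ ppCorner k Q n i j) (hy0 : y ≠ 0)
    (hsocle : ∀ b, y * arr k b = 0) {x : PreprojAlg k Q} (hx : x ∈ ppPiece k Q n)
    (hix : ppIdem k Q i * x = x) : ∃ c : k, x = c • y := by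
  obtain ⟨hyn, hiy, hyj⟩ := mem_corner_iff.1 hy
  obtain ⟨f, hf⟩ := Module.Projective.exists_dual_eq_one k hy0
  let T : PreprojAlg k Q →ₗ[k] PreprojAlg k Q :=
    (f ∘ₗ LinearMap.mulRight k (ppIdem k Q j)).smulRight y
  obtain ⟨s, hs⟩ := (isMeshCompatible_smulRight hyj hsocle f).exists_eq_mul n
  obtain ⟨c, hc⟩ := (Submodule.mem_span_range_iff_exists_fun k).1
    (piece_zero_le_span_idem (proj_mem_piece 0 s))
  have hTc {x : PreprojAlg k Q} (hx : x ∈ ppPiece k Q n) (hix : ppIdem k Q i * x = x) :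
      T x = c i • x := by
    have hTx : T x ∈ ppPiece k Q n := Submodule.smul_mem _ _ hyn
    have hproj := proj_add_mul 0 s hx
    rw [zero_add] at hproj
    rw [← proj_eq_self hTx, hs x hx, hproj, ← hc, sum_smul_idem_mul hix]
  have hci : c i = 1 := by
    have hTy : T y = y := by simp [T, hyj, hf]
    refine smul_left_injective k hy0 ?_
    simp only [← hTc hyn hiy, hTy, one_smul]
  have hTx : T x = f (x * ppIdem k Q j) • y := rfl
  exact ⟨f (x * ppIdem k Q j), by rw [← hTx, hTc hx hix, hci, one_smul]⟩

theorem corner_succ_eq_bot_of_socle (hy : y ∈ ppCorner k Q n i j) (hy0 : y ≠ 0)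
    (hsocle : ∀ b, y * arr k b = 0) (l : Fin Q.r) : ppCorner k Q (n + 1) i l = ⊥ := by
  refine (Submodule.eq_bot_iff _).2 fun x hx => ?_
  obtain ⟨hxn, hix, -⟩ := mem_corner_iff.1 hx
  suffices h : ppPiece k Q (n + 1) ≤ LinearMap.ker (LinearMap.mulLeft k (ppIdem k Q i)) from
    hix.symm.trans (h hxn)
  refine (piece_succ_le_iSup n).trans (iSup_le fun b => ?_)
  rintro _ ⟨z, hz, rfl⟩
  have hiz : ppIdem k Q i * z ∈ ppPiece k Q n := by
    simpa using SetLike.mul_mem_graded (idem_mem_piece i) hz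
  obtain ⟨c, hc⟩ := exists_eq_smul_of_socle hy hy0 hsocle hiz
    (by rw [← mul_assoc, ((isMeshSystem k Q).idem.idem i).eq])
  simp [← mul_assoc, hc, hsocle]

end Socle

section MeshComplex

lemma sum_finrank_eq_of_exact {ι K V : Type*} [DivisionRing K] [AddCommGroup V] [Module K V]
    [Fintype ι] {A C : Submodule K V} {B : ι → Submodule K V} [∀ b, FiniteDimensional K (B b)]
    {f : A →ₗ[K] (b : ι) → B b} {g : ((b : ι) → B b) →ₗ[K] C} (hfg : Function.Exact f g)
    (hg : Function.Surjective g) :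
    ∑ b, Module.finrank K (B b) =
      Module.finrank K C + Module.finrank K (LinearMap.range f) := by
  rw [← Module.finrank_pi_fintype, ← g.finrank_range_add_finrank_ker, hfg.linearMap_ker_eq,
    LinearMap.range_eq_top.2 hg, finrank_top]

variable {n : ℕ} {i j l : Fin Q.r}

lemma mul_arr_mem_corner {b : Q.DArrow} (hb : dtgt b = l) :
    ∀ x ∈ ppCorner k Q n i j, x * arr k b ∈ ppCorner k Q (n + 1) i l := by
  intro x hx
  obtain ⟨hxn, hix, -⟩ := mem_corner_iff.1 hx
  refine mem_corner_iff.2 ⟨SetLike.mul_mem_graded hxn (arr_mem_piece b), ?_, ?_⟩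
  · rw [← mul_assoc, hix]
  · rw [mul_assoc, ← hb, (isMeshSystem k Q).mul_idem]

variable (k n i j) in
/-- The map `y ↦ (y * b)_b` from `e_i Π_n e_j`, over the arrows `b` starting at `j`. -/
noncomputable def arrowComponents :
    ppCorner k Q n i j →ₗ[k] (b : OutArrow j) → ppCorner k Q (n + 1) i (dtgt b.1) :=
  LinearMap.pi fun b => (LinearMap.mulRight k (arr k b.1)).restrict (mul_arr_mem_corner rfl)

variable (k n i j) in
/-- The differential `(z_b)_b ↦ ∑ ± z_b * b.swap` onto `e_i Π_{n+1} e_j`; its composite with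
`arrowComponents` vanishes by the mesh relation at `j`. -/
noncomputable def meshDifferential :
    ((b : OutArrow j) → ppCorner k Q n i (dtgt b.1)) →ₗ[k] ppCorner k Q (n + 1) i j :=
  ∑ b, dsign k b.1 • (LinearMap.mulRight k (arr k b.1.swap)).restrict
    (mul_arr_mem_corner ((dtgt_swap b.1).trans b.2)) ∘ₗ LinearMap.proj b

lemma arrowComponents_apply (y : ppCorner k Q n i j) (b : OutArrow j) :
    (arrowComponents k n i j y b : PreprojAlg k Q) = y * arr k b.1 := rfl

lemma meshDifferential_apply (z : (b : OutArrow j) → ppCorner k Q n i (dtgt b.1)) :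
    (meshDifferential k n i j z : PreprojAlg k Q) =
      ∑ b, dsign k b.1 • ((z b : PreprojAlg k Q) * arr k b.1.swap) := by
  simp [meshDifferential, LinearMap.sum_apply]
  rfl

lemma meshDifferential_surjective : Function.Surjective (meshDifferential k n i j) := by
  classical
  suffices h : ppPiece k Q (n + 1) ≤ ((LinearMap.range (meshDifferential k n i j)).map
      (ppCorner k Q (n + 1) i j).subtype).comap
        ((LinearMap.mulLeft k (ppIdem k Q i)).comp (LinearMap.mulRight k (ppIdem k Q j))) by
    rintro ⟨_, x, hx, rfl⟩
    obtain ⟨_, ⟨z, rfl⟩, hz⟩ := h hx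
    exact ⟨z, Subtype.ext hz⟩
  refine (piece_succ_le_iSup n).trans (iSup_le fun b => ?_)
  rintro _ ⟨z, hz, rfl⟩
  obtain rfl | hb := eq_or_ne (dtgt b) j
  · let w : ppCorner k Q n i (dtgt b.swap) := ⟨_, z, hz, rfl⟩
    refine ⟨_, ⟨Pi.single ⟨b.swap, dsrc_swap b⟩ (dsign k b.swap • w), rfl⟩, ?_⟩
    rw [Submodule.subtype_apply, meshDifferential_apply,
      Finset.sum_eq_single ⟨b.swap, dsrc_swap b⟩]
    · simp [w, smul_smul, dsign_mul_self, mul_assoc, (isMeshSystem k Q).idem_mul,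
        (isMeshSystem k Q).mul_idem]
    · intro b' _ hb'
      simp [hb']
    · simp
  · have hzb : z * arr k b * ppIdem k Q j = 0 := by
      rw [mul_assoc, arr_mul_idem, if_neg hb, mul_zero]
    simp [hzb]

lemma exists_eq_mul_arr_of_meshDifferential_eq_zero
    {z : (b : OutArrow j) → ppCorner k Q n i (dtgt b.1)} (hz : meshDifferential k n i j z = 0) :
    ∃ y : PreprojAlg k Q, ∀ b, (z b : PreprojAlg k Q) = y * arr k b.1 := by
  let z' (b : Q.DArrow) : PreprojAlg k Q := if h : dsrc b = j then z ⟨b, h⟩ else 0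
  have hz' (b : OutArrow j) : z' b.1 = z b := dif_pos b.2
  have hidem (b : Q.DArrow) : z' b * ppIdem k Q (dtgt b) = z' b := by
    dsimp only [z']
    split_ifs with h
    · exact (mem_corner_iff.1 (z ⟨b, h⟩).2).2.2
    · exact zero_mul _
  have hmesh : ∑ b, dsign k b • (z' b * arr k b.swap) = 0 := by
    have h := congrArg Subtype.val hz
    simp only [meshDifferential_apply, ← hz'] at h
    rw [sum_outArrow j fun b => dsign k b • (z' b * arr k b.swap)] at h
    refine (Finset.sum_congr rfl fun b _ => ?_).trans h
    split_ifs with hb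
    · rfl
    · simp [z', hb]
  obtain ⟨y, hy⟩ := exists_eq_mul_arr hidem hmesh
  exact ⟨y, fun b => (hz' b).symm.trans (hy b)⟩

lemma meshDifferential_zero_injective : Function.Injective (meshDifferential k 0 i j) := by
  refine (injective_iff_map_eq_zero _).2 fun z hz => funext fun b => Subtype.ext ?_
  obtain ⟨y, hy⟩ := exists_eq_mul_arr_of_meshDifferential_eq_zero hz
  rw [← proj_eq_self (mem_corner_iff.1 (z b).2).1, hy b]
  exact DirectSum.coe_decompose_mul_of_right_mem_of_not_le _ (arr_mem_piece b.1) (by simp)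

lemma exact_arrowComponents_meshDifferential :
    Function.Exact (arrowComponents k n i j) (meshDifferential k (n + 1) i j) := by
  intro z
  constructor
  · intro hz
    obtain ⟨y, hy⟩ := exists_eq_mul_arr_of_meshDifferential_eq_zero hz
    refine ⟨⟨_, _, proj_mem_piece n y, rfl⟩, funext fun b => Subtype.ext ?_⟩
    obtain ⟨hzn, hiz, -⟩ := mem_corner_iff.1 (z b).2
    have hb : ppIdem k Q j * arr k b.1 = arr k b.1 := by rw [idem_mul_arr, if_pos b.2]
    rw [arrowComponents_apply]
    simp only [LinearMap.comp_apply, LinearMap.mulLeft_apply, LinearMap.mulRight_apply, mul_assoc,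
      hb]
    rw [← proj_add_mul n y (arr_mem_piece b.1), ← hy, proj_eq_self hzn, hiz]
  · rintro ⟨y, rfl⟩
    refine Subtype.ext ?_
    rw [meshDifferential_apply]
    simp only [arrowComponents_apply]
    rw [sum_outArrow j fun b => dsign k b • ((y : PreprojAlg k Q) * arr k b * arr k b.swap)]
    have h := congrArg ((y : PreprojAlg k Q) * ·) ((isMeshSystem k Q).mesh_vertex j)
    simp only [Finset.mul_sum, mul_smul_comm, mul_ite, ← mul_assoc, smul_ite, mul_zero,
      smul_zero] at h ⊢
    exact h

end MeshComplex

section Dimensions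

variable {n : ℕ} {i j : Fin Q.r}

lemma corner_zero_self (i : Fin Q.r) :
    ppCorner k Q 0 i i = Submodule.span k {ppIdem k Q i} := by
  refine le_antisymm (fun x hx => ?_) (Submodule.span_le.2 (Set.singleton_subset_iff.2 ?_))
  · obtain ⟨hx0, hix, hxi⟩ := mem_corner_iff.1 hx
    obtain ⟨c, rfl⟩ := (Submodule.mem_span_range_iff_exists_fun k).1 (piece_zero_le_span_idem hx0)
    rw [← hxi, sum_smul_idem_mul ((isMeshSystem k Q).idem.idem i).eq]
    exact Submodule.mem_span_singleton.2 ⟨c i, rfl⟩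
  · have hi := ((isMeshSystem k Q).idem.idem i).eq
    exact mem_corner_iff.2 ⟨idem_mem_piece i, hi, hi⟩

lemma corner_zero_of_ne (hij : i ≠ j) : ppCorner k Q 0 i j = ⊥ := by
  refine (Submodule.eq_bot_iff _).2 fun x hx => ?_
  obtain ⟨hx0, hix, hxj⟩ := mem_corner_iff.1 hx
  obtain ⟨c, rfl⟩ := (Submodule.mem_span_range_iff_exists_fun k).1 (piece_zero_le_span_idem hx0)
  rw [sum_smul_idem_mul ((isMeshSystem k Q).idem.idem j).eq] at hxj
  rw [← hix, ← hxj, mul_smul_comm, idem_mul_idem, if_neg hij, smul_zero]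

instance finite_corner (n : ℕ) (i j : Fin Q.r) :
    Module.Finite k (ppCorner k Q n i j) := by
  induction n generalizing j with
  | zero =>
    obtain rfl | hij := eq_or_ne i j
    · rw [corner_zero_self]
      infer_instance
    · rw [corner_zero_of_ne hij]
      infer_instance
  | succ n ih => exact .of_surjective (meshDifferential k n i j) meshDifferential_surjective

instance free_corner (n : ℕ) (i j : Fin Q.r) : Module.Free k (ppCorner k Q n i j) :=
  .of_divisionRing k (ppCorner k Q n i j)

variable (k Q) in
/-- The dimension matrix `[Π(Q)_n]`. -/
noncomputable def dimMatrix (n : ℕ) : Matrix (Fin Q.r) (Fin Q.r) ℕ :=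
  Matrix.of fun i j => Module.finrank k (ppCorner k Q n i j)

lemma dimMatrix_mul_doubleAdj_apply (n : ℕ) (i j : Fin Q.r) :
    (dimMatrix k Q n * Q.doubleAdj : Matrix _ _ ℕ) i j =
      ∑ b : OutArrow j, Module.finrank k (ppCorner k Q n i (dtgt b.1)) := by
  rw [Matrix.mul_apply]
  refine .trans (Finset.sum_congr rfl fun l _ => ?_) (sum_outArrow_dtgt j (dimMatrix k Q n i)).symm
  rw [smul_eq_mul, mul_comm, doubleAdj_comm]

lemma dimMatrix_zero : dimMatrix k Q 0 = 1 := by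
  ext i j
  obtain rfl | hij := eq_or_ne i j
  · rw [dimMatrix, Matrix.of_apply, corner_zero_self, finrank_span_singleton (idem_ne_zero i),
      Matrix.one_apply_eq]
  · rw [dimMatrix, Matrix.of_apply, corner_zero_of_ne hij, finrank_bot, Matrix.one_apply_ne hij]

lemma dimMatrix_one : dimMatrix k Q 1 = Q.doubleAdj := by
  ext i j
  rw [← one_mul Q.doubleAdj, ← dimMatrix_zero (k := k), dimMatrix_mul_doubleAdj_apply,
    ← Module.finrank_pi_fintype]
  exact (LinearEquiv.ofBijective _
    ⟨meshDifferential_zero_injective, meshDifferential_surjective⟩).finrank_eq.symm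

lemma dimMatrix_mul_doubleAdj_eq_add_finrank_range (n : ℕ) (i j : Fin Q.r) :
    (dimMatrix k Q (n + 1) * Q.doubleAdj : Matrix _ _ ℕ) i j =
      dimMatrix k Q (n + 2) i j + Module.finrank k (LinearMap.range (arrowComponents k n i j)) := by
  rw [dimMatrix_mul_doubleAdj_apply]
  exact sum_finrank_eq_of_exact exact_arrowComponents_meshDifferential meshDifferential_surjective

lemma dimMatrix_mul_doubleAdj_le (n : ℕ) (i j : Fin Q.r) :
    (dimMatrix k Q (n + 1) * Q.doubleAdj : Matrix _ _ ℕ) i j ≤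
      dimMatrix k Q (n + 2) i j + dimMatrix k Q n i j := by
  rw [dimMatrix_mul_doubleAdj_eq_add_finrank_range]
  exact Nat.add_le_add_left (LinearMap.finrank_range_le _) _

lemma dimMatrix_mul_doubleAdj_of_injective
    (h : ∀ n i j, Function.Injective (arrowComponents k (Q := Q) n i j)) (n : ℕ) :
    dimMatrix k Q (n + 1) * Q.doubleAdj = dimMatrix k Q (n + 2) + dimMatrix k Q n := by
  ext i j
  rw [dimMatrix_mul_doubleAdj_eq_add_finrank_range, LinearMap.finrank_range_of_inj (h n i j)]
  rfl

end Dimensions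

section NonDynkin

variable {n : ℕ} {i j : Fin Q.r}

lemma dimMatrix_succ_eq_zero_of_not_injective_arrowComponents
    (h : ¬ Function.Injective (arrowComponents k n i j)) (l : Fin Q.r) :
    dimMatrix k Q (n + 1) i l = 0 := by
  obtain ⟨y, hy, hy0⟩ : ∃ y, arrowComponents k n i j y = 0 ∧ y ≠ 0 := by
    simpa [injective_iff_map_eq_zero] using h
  have hsocle (b : Q.DArrow) : (y : PreprojAlg k Q) * arr k b = 0 := by
    by_cases hb : dsrc b = j
    · exact congrArg Subtype.val (congrFun hy ⟨b, hb⟩)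
    · rw [← (mem_corner_iff.1 y.2).2.2, mul_assoc, idem_mul_arr, if_neg hb, mul_zero]
  have hy0' : (y : PreprojAlg k Q) ≠ 0 := fun h => hy0 (Subtype.ext h)
  rw [dimMatrix, Matrix.of_apply, corner_succ_eq_bot_of_socle y.2 hy0' hsocle, finrank_bot]

-- The recursive inequalities telescope.
lemma sum_dimMatrix_mul_doubleAdj_le (n : ℕ) (i j : Fin Q.r) :
    ∑ m ∈ Finset.range (n + 1), (dimMatrix k Q m * Q.doubleAdj : Matrix _ _ ℕ) i j +
        dimMatrix k Q 0 i j + dimMatrix k Q n i j ≤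
      2 * ∑ m ∈ Finset.range (n + 1), dimMatrix k Q m i j + dimMatrix k Q (n + 1) i j := by
  induction n with
  | zero =>
    have h : (dimMatrix k Q 0 * Q.doubleAdj : Matrix _ _ ℕ) i j = dimMatrix k Q 1 i j := by
      rw [dimMatrix_zero, one_mul, dimMatrix_one]
    simp only [zero_add, Finset.sum_range_one, h]
    omega
  | succ n ih =>
    rw [Finset.sum_range_succ, Finset.sum_range_succ (fun m => dimMatrix k Q m i j)]
    have hle := dimMatrix_mul_doubleAdj_le (k := k) n i j
    rw [add_assoc n 1 1, one_add_one_eq_two]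
    omega

theorem isDynkin_of_not_injective_arrowComponents (hconn : Q.Connected)
    (h : ¬ Function.Injective (arrowComponents k n i j)) : Q.IsDynkin := by
  let s (l : Fin Q.r) : ℕ := ∑ m ∈ Finset.range (n + 1), dimMatrix k Q m i l
  have hs (l : Fin Q.r) :
      ∑ b : OutArrow l, s (dtgt b.1) + dimMatrix k Q 0 i l ≤ 2 * s l := by
    have hsum : ∑ b : OutArrow l, s (dtgt b.1) =
        ∑ m ∈ Finset.range (n + 1), (dimMatrix k Q m * Q.doubleAdj : Matrix _ _ ℕ) i l := by
      simp only [dimMatrix_mul_doubleAdj_apply]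
      exact Finset.sum_comm
    have hle := sum_dimMatrix_mul_doubleAdj_le (k := k) n i l
    rw [dimMatrix_succ_eq_zero_of_not_injective_arrowComponents h, add_zero, ← hsum] at hle
    exact le_of_add_le_left hle
  have hsub : IsSubadditive fun l => (s l : ℝ) := fun l => by
    beta_reduce
    exact_mod_cast le_of_add_le_left (hs l)
  refine hsub.isDynkin hconn (fun l => Nat.cast_nonneg _) (i := i) ?_
  have hi := hs i
  rw [dimMatrix_zero, Matrix.one_apply_eq] at hi
  exact_mod_cast hi

theorem dimMatrix_mul_doubleAdj (hconn : Q.Connected) (hnd : ¬ Q.IsDynkin) (n : ℕ) :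
    dimMatrix k Q (n + 1) * Q.doubleAdj = dimMatrix k Q (n + 2) + dimMatrix k Q n :=
  dimMatrix_mul_doubleAdj_of_injective
    (fun _ _ _ => by_contra fun h => hnd (isDynkin_of_not_injective_arrowComponents hconn h)) n

theorem ppHilb_mul_eq_one (hconn : Q.Connected) (hnd : ¬ Q.IsDynkin) :
    ppHilb k Q *
      (1 - (PowerSeries.X : PowerSeries k) • (Q.doubleAdj.map (Nat.cast : ℕ → PowerSeries k))
        + (PowerSeries.X ^ 2 : PowerSeries k) •
            (1 : Matrix (Fin Q.r) (Fin Q.r) (PowerSeries k))) = 1 := by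
  let φ : Matrix (Fin Q.r) (Fin Q.r) ℕ →+* Matrix (Fin Q.r) (Fin Q.r) k :=
    (Nat.castRingHom k).mapMatrix
  have hcast : Q.doubleAdj.map (Nat.cast : ℕ → PowerSeries k) =
      (φ Q.doubleAdj).map PowerSeries.C := by
    ext1 i j
    simp [φ]
  rw [hcast]
  exact mk_mul_one_sub_X_smul_add_X_sq_smul_eq_one (D := fun n => φ (dimMatrix k Q n))
    (by rw [dimMatrix_zero, map_one]) (by rw [dimMatrix_one])
    fun n => by rw [← map_mul, ← map_add, dimMatrix_mul_doubleAdj hconn hnd]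

end NonDynkin

end PreprojAlg

theorem preprojective_hilbert_series_non_dynkin_general
    (k : Type) [Field k] (Q : FinQuiver) (hconn : Q.Connected) (hnd : ¬ Q.IsDynkin) :
    (∀ (n : ℕ) (i j : Fin Q.r), FiniteDimensional k (ppCorner k Q n i j)) ∧
    ppHilb k Q *
      (1 - (PowerSeries.X : PowerSeries k) • (Q.doubleAdj.map (Nat.cast : ℕ → PowerSeries k))
        + (PowerSeries.X ^ 2 : PowerSeries k) •
            (1 : Matrix (Fin Q.r) (Fin Q.r) (PowerSeries k))) = 1 ∧
    (1 - (PowerSeries.X : PowerSeries k) • (Q.doubleAdj.map (Nat.cast : ℕ → PowerSeries k))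
        + (PowerSeries.X ^ 2 : PowerSeries k) •
            (1 : Matrix (Fin Q.r) (Fin Q.r) (PowerSeries k))) * ppHilb k Q = 1 :=
  have hmul := PreprojAlg.ppHilb_mul_eq_one hconn hnd
  ⟨fun n i j => PreprojAlg.finite_corner n i j, hmul, mul_eq_one_comm.1 hmul⟩

/-- **Hilbert series of the preprojective algebra, non-Dynkin case**
(Malkin–Ostrik–Vybornov; Etingof–Eu in arbitrary characteristic).
For a connected finite acyclic non-Dynkin quiver `Q`, each graded piece of
`Π(Q)` is finite dimensional and
`h_Π(t) · (1 - C t + t² · 1) = 1 = (1 - C t + t² · 1) · h_Π(t)`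
in the ring of `r × r` matrices over `k[[t]]`, where `C` is the adjacency
matrix of the double quiver; equivalently `h_Π(t) = 1 / (1 - C t + t²)`. -/
theorem preprojective_hilbert_series_non_dynkin
    (k : Type) [Field k] (Q : FinQuiver) (hr : 0 < Q.r)
    (hconn : Q.Connected) (hacyc : Q.Acyclic) (hnd : ¬ Q.IsDynkin) :
    (∀ (n : ℕ) (i j : Fin Q.r), FiniteDimensional k (ppCorner k Q n i j)) ∧
    ppHilb k Q *
      (1 - (PowerSeries.X : PowerSeries k) • (Q.doubleAdj.map (Nat.cast : ℕ → PowerSeries k))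
        + (PowerSeries.X ^ 2 : PowerSeries k) •
            (1 : Matrix (Fin Q.r) (Fin Q.r) (PowerSeries k))) = 1 ∧
    (1 - (PowerSeries.X : PowerSeries k) • (Q.doubleAdj.map (Nat.cast : ℕ → PowerSeries k))
        + (PowerSeries.X ^ 2 : PowerSeries k) •
            (1 : Matrix (Fin Q.r) (Fin Q.r) (PowerSeries k))) * ppHilb k Q = 1 :=
  preprojective_hilbert_series_non_dynkin_general k Q hconn hnd
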